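/- arXiv:2109.00447 — 2 statements merged into one kernel-verified Lean document; each statement's English description precedes it below -/
import Mathlib

section
/- Let ⟨·,·⟩ be a nondegenerate symmetric bilinear form on T*𝔥₃ that vanishes identically on 𝔤′ × 𝔤′, where 𝔤′ = span(e₄,e₅,e₆). Then there exists a Lie algebra automorphism F of T*𝔥₃ such that the matrix of (x,y) ↦ ⟨Fx,Fy⟩ in the basis (e₁,…,e₆) is the block matrix [[0, M],[Mᵀ, 0]], where M is one of the following 3×3 matrices: diag(1, λ₂, λ₃); [[1,0,0],[0,λ₂,1],[0,0,λ₂]]; [[1,1,0],[0,1,1],[0,0,1]]; or [[1,0,0],[0,λ₂,−λ₃],[0,λ₃,λ₂]] with λ₃ ≠ 0. In particular, every such form has neutral signature (3,3). -/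
open Matrix

noncomputable section

/-- The Lie bracket of `T*𝔥₃` in the basis `(e₁,…,e₆)`:
`[e₁,e₂]=e₆`, `[e₁,e₃]=−e₅`, `[e₂,e₃]=e₄`. -/
def bra (x y : Fin 6 → ℝ) : Fin 6 → ℝ :=
  ![0, 0, 0, x 1 * y 2 - x 2 * y 1, x 2 * y 0 - x 0 * y 2, x 0 * y 1 - x 1 * y 0]

/-- The derived algebra `𝔤′ = span(e₄,e₅,e₆)` of `T*𝔥₃`. -/
def gder : Submodule ℝ (Fin 6 → ℝ) :=
  Submodule.span ℝ {Pi.single 3 1, Pi.single 4 1, Pi.single 5 1}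

/-- `F` is a Lie algebra automorphism of `T*𝔥₃` (as a matrix in the basis `e`). -/
def IsAuto (F : Matrix (Fin 6) (Fin 6) ℝ) : Prop :=
  Function.Bijective F.mulVec ∧
    ∀ x y : Fin 6 → ℝ, F.mulVec (bra x y) = bra (F.mulVec x) (F.mulVec y)

/-! In block form relative to a complement of `𝔤′` and to `𝔤′`, the bracket is the cross product
from the first block to the second, so every `F = [[A, 0], [C, (adj A)ᵀ]]` with `A` invertible is
an automorphism. The Gram matrix of the form is `[[S, B], [Bᵀ, 0]]` with `B` invertible. The choice
`C = -(1/2) B⁻¹ S A` kills `S`, and `B` becomes `Aᵀ B (adj A)ᵀ`: a conjugate of `B` up to a nonzero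
scalar, which can be prescribed because the size of `B` is odd. Hence `M` is a canonical form of `B`
up to conjugation and scaling. For that, either `B` has a simple eigenvalue, which splits off as a
direct summand because a Sylvester equation is solvable, or `B - k` is nilpotent for some `k`.
-/

section RealRoots

open Polynomial

theorem exists_isRoot_of_odd_natDegree_real {p : ℝ[X]} (hp : Odd p.natDegree) :
    ∃ x, p.IsRoot x := by
  by_contra! hroot
  have hcast : (Int.negOnePow p.natDegree : ℝ) = -1 := by
    simp [Int.negOnePow_odd p.natDegree (by exact_mod_cast hp)]
  rcases le_total 0 p.leadingCoeff with hlc | hlc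
  · have hright := zero_lt_eval_of_roots_lt_of_leadingCoeff_nonneg (x := 0)
      (fun y hy => absurd hy (hroot y)) hlc
    have hleft := zero_lt_negOnePow_mul_eval_of_lt_roots_of_leadingCoeff_nonneg (x := 0)
      (fun y hy => absurd hy (hroot y)) hlc
    rw [hcast] at hleft
    linarith
  · have hright := eval_lt_zero_of_roots_lt_of_leadingCoeff_nonpos (x := 0)
      (fun y hy => absurd hy (hroot y)) hlc
    have hleft := negOnePow_mul_eval_lt_zero_of_lt_roots_of_leadingCoeff_nonpos (x := 0)
      (fun y hy => absurd hy (hroot y)) hlc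
    rw [hcast] at hleft
    linarith

instance : IsRealClosed ℝ :=
  .of_linearOrderedField (fun h => Real.isSquare_iff.2 h) exists_isRoot_of_odd_natDegree_real

theorem exists_isRoot_rootMultiplicity_eq_one_or_eq_pow {K : Type*} [CommRing K] [IsDomain K]
    {p : K[X]} (hp : p.Monic) (hdeg : p.natDegree ≤ 3) (hroot : ∃ x, p.IsRoot x) :
    ∃ k, p.IsRoot k ∧ (p.rootMultiplicity k = 1 ∨ p = (X - C k) ^ p.natDegree) := by
  obtain ⟨k, hk⟩ := hroot
  obtain ⟨q, hpq, hqk⟩ := exists_eq_pow_rootMultiplicity_mul_and_not_dvd p hp.ne_zero k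
  set m := p.rootMultiplicity k
  have hm_pos : 0 < m := (rootMultiplicity_pos hp.ne_zero).2 hk
  have hpow : ((X - C k) ^ m).Monic := (monic_X_sub_C k).pow m
  have hq : q.Monic := hpow.of_mul_monic_left (hpq ▸ hp)
  have hadd : p.natDegree = m + q.natDegree := by
    conv_lhs => rw [hpq, hpow.natDegree_mul hq, natDegree_pow, natDegree_X_sub_C, mul_one]
  obtain hm_one | hq_zero | hq_one : m = 1 ∨ q.natDegree = 0 ∨ q.natDegree = 1 := by lia
  · exact ⟨k, hk, .inl hm_one⟩
  · refine ⟨k, hk, .inr ?_⟩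
    rw [hadd, hq_zero, add_zero]
    simpa [hq.natDegree_eq_zero.1 hq_zero] using hpq
  · obtain ⟨s, rfl⟩ : ∃ s, q = X - C s := by
      refine ⟨-q.coeff 0, ?_⟩
      simpa using hq.eq_X_add_C hq_one
    have hsk : s ≠ k := by rintro rfl; exact hqk dvd_rfl
    have hs : p.rootMultiplicity s = 1 := by
      rw [hpq, rootMultiplicity_mul (hpq ▸ hp.ne_zero), rootMultiplicity_X_sub_C_self,
        rootMultiplicity_eq_zero, zero_add]
      simp [sub_eq_zero, hsk]
    exact ⟨s, (rootMultiplicity_pos hp.ne_zero).1 (by lia), .inl hs⟩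

end RealRoots

section Conjugacy

open Polynomial

theorem isConj_smul {R A : Type*} [Monoid A] [SMul R A] [SMulCommClass R A A]
    [IsScalarTower R A A] {a b : A} (c : R) (h : IsConj a b) : IsConj (c • a) (c • b) :=
  Exists.imp (fun _ hu => SemiconjBy.smul_right hu c) h

theorem isConj_smul_one_add {R A : Type*} [Semiring A] [SMul R A] [SMulCommClass R A A]
    [IsScalarTower R A A] {a b : A} (c : R) (h : IsConj a b) :
    IsConj (c • 1 + a) (c • 1 + b) :=
  Exists.imp (fun u hu => ((SemiconjBy.one_right (u : A)).smul_right c).add_right hu) h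

variable {m n : Type*} [Fintype m] [DecidableEq m] [Fintype n] [DecidableEq n]

section CommRing

variable {R : Type*} [CommRing R]

theorem isConj_reindex (e : m ≃ n) {A B : Matrix m m R} (h : IsConj A B) :
    IsConj (reindex e e A) (reindex e e B) :=
  (reindexAlgEquiv R R e : Matrix m m R →* Matrix n n R).map_isConj h

theorem charpoly_eq_of_isConj {A B : Matrix n n R} (h : IsConj A B) :
    A.charpoly = B.charpoly := by
  obtain ⟨u, hu⟩ := h
  rw [← charpoly_units_conj u A, hu.eq, mul_assoc]
  simp

theorem isConj_fromBlocks_diagonal_right (A : Matrix m m R) {D E : Matrix n n R} (h : IsConj D E) :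
    IsConj (fromBlocks A 0 0 D) (fromBlocks A 0 0 E) := by
  obtain ⟨u, hu⟩ := h
  obtain ⟨P, hP⟩ : IsUnit (fromBlocks (1 : Matrix m m R) 0 0 (u : Matrix n n R)) :=
    isUnit_fromBlocks_zero₂₁.2 ⟨isUnit_one, u.isUnit⟩
  refine ⟨P, ?_⟩
  rw [SemiconjBy, hP, fromBlocks_multiply, fromBlocks_multiply]
  simp [hu.eq]

theorem isConj_fromBlocks_of_mul_sub_mul_eq {A : Matrix m m R} {C X : Matrix m n R}
    {D : Matrix n n R} (h : A * X - X * D = C) :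
    IsConj (fromBlocks A C 0 D) (fromBlocks A 0 0 D) := by
  obtain ⟨P, hP⟩ : IsUnit (fromBlocks 1 X 0 1) :=
    isUnit_fromBlocks_zero₂₁.2 ⟨isUnit_one (M := Matrix m m R), isUnit_one (M := Matrix n n R)⟩
  refine ⟨P, ?_⟩
  rw [SemiconjBy, hP, fromBlocks_multiply, fromBlocks_multiply]
  simp [← h]

end CommRing

variable {K : Type*} [Field K]

theorem isConj_of_linearIndependent {A M : Matrix n n K} {v : n → n → K}
    (hv : LinearIndependent K v) (h : ∀ j, A *ᵥ v j = ∑ i, M i j • v i) : IsConj A M := by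
  obtain ⟨P, hP⟩ : IsUnit (of v)ᵀ :=
    (isUnit_transpose _).2 (linearIndependent_rows_iff_isUnit.1 hv)
  refine IsConj.symm ⟨P, ?_⟩
  rw [SemiconjBy, hP]
  ext i j
  have := congrFun (h j) i
  simp only [Finset.sum_apply, Pi.smul_apply, smul_eq_mul] at this
  simp only [Matrix.mul_apply, transpose_apply, of_apply, mul_comm (v _ _)]
  exact this.symm

theorem exists_linearIndependent_comp_castAdd_eq {V : Type*} [AddCommGroup V] [Module K V]
    {k : ℕ} {v : Fin k → V} (hv : LinearIndependent K v) :
    ∀ {l : ℕ}, k + l ≤ Module.finrank K V →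
      ∃ w : Fin (k + l) → V, LinearIndependent K w ∧ w ∘ Fin.castAdd l = v
  | 0, _ => ⟨v, hv, rfl⟩
  | l + 1, h => by
    obtain ⟨w, hw, hwv⟩ := exists_linearIndependent_comp_castAdd_eq hv (l := l) (by lia)
    obtain ⟨x, hx⟩ := exists_linearIndependent_snoc_of_lt_finrank hw (by lia)
    refine ⟨Fin.snoc w x, hx, ?_⟩
    rw [← hwv]
    ext i
    exact congrFun (Fin.snoc_comp_castSucc (a := x) (f := w)) (Fin.castAdd l i)

theorem exists_mulVec_eq_smul_of_isRoot_charpoly {A : Matrix n n K} {k : K}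
    (hk : A.charpoly.IsRoot k) : ∃ v ≠ 0, A *ᵥ v = k • v := by
  rw [IsRoot, eval_charpoly] at hk
  obtain ⟨v, hv, hAv⟩ := exists_mulVec_eq_zero_iff.2 hk
  refine ⟨v, hv, ?_⟩
  rw [sub_mulVec, sub_eq_zero] at hAv
  simpa using hAv.symm

variable {l : ℕ}

theorem exists_isConj_fromBlocks_of_isRoot_charpoly {A : Matrix (Fin (1 + l)) (Fin (1 + l)) K}
    {k : K} (hk : A.charpoly.IsRoot k) :
    ∃ (r : Matrix (Fin 1) (Fin l) K) (D : Matrix (Fin l) (Fin l) K),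
      IsConj A (reindex finSumFinEquiv finSumFinEquiv (fromBlocks (k • 1) r 0 D)) := by
  obtain ⟨v, hv, hAv⟩ := exists_mulVec_eq_smul_of_isRoot_charpoly hk
  obtain ⟨w, hw, hwv⟩ := exists_linearIndependent_comp_castAdd_eq (l := l)
    (LinearIndependent.of_subsingleton (R := K) (v := fun _ : Fin 1 => v) 0 hv) (by simp)
  let b := basisOfLinearIndependentOfCardEqFinrank hw (by simp)
  have hb (i) : b i = w i := by simp [b]
  set M := of fun i j => b.repr (A *ᵥ w j) i with hM
  have hAM : IsConj A M :=
    isConj_of_linearIndependent hw fun j => by simpa [hb, hM] using (b.sum_repr (A *ᵥ w j)).symm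
  have hcol (i) : M i (Fin.castAdd l 0) = k • Finsupp.single (Fin.castAdd l 0) (1 : K) i := by
    have hv' : w (Fin.castAdd l 0) = v := congrFun hwv 0
    rw [hM, of_apply, hv', hAv, ← hv', ← hb, map_smul, b.repr_self, Finsupp.smul_apply]
  set B := reindex finSumFinEquiv.symm finSumFinEquiv.symm M with hB
  have hB₁₁ : B.toBlocks₁₁ = k • 1 := by
    ext i j
    simpa [hB, toBlocks₁₁, Subsingleton.elim i 0, Subsingleton.elim j 0]
      using hcol (Fin.castAdd l 0)
  have hB₂₁ : B.toBlocks₂₁ = 0 := by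
    ext i j
    simpa [hB, toBlocks₂₁, Subsingleton.elim j 0, Fin.ext_iff]
      using hcol (Fin.natAdd 1 i)
  refine ⟨B.toBlocks₁₂, B.toBlocks₂₂, ?_⟩
  rw [← hB₁₁, ← hB₂₁, fromBlocks_toBlocks]
  simpa [hB] using hAM

theorem exists_isConj_fromBlocks_of_rootMultiplicity_eq_one
    {A : Matrix (Fin (1 + l)) (Fin (1 + l)) K} {k : K} (hk : A.charpoly.rootMultiplicity k = 1) :
    ∃ D : Matrix (Fin l) (Fin l) K,
      IsConj A (reindex finSumFinEquiv finSumFinEquiv (fromBlocks (k • 1) 0 0 D)) := by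
  have hroot : A.charpoly.IsRoot k :=
    (rootMultiplicity_pos A.charpoly_monic.ne_zero).1 (by lia)
  obtain ⟨r, D, hAD⟩ := exists_isConj_fromBlocks_of_isRoot_charpoly hroot
  have hchar : A.charpoly = (X - C k) * D.charpoly := by
    rw [charpoly_eq_of_isConj hAD, charpoly_reindex, charpoly_fromBlocks_zero₂₁]
    congr 1
    simp [charpoly, charmatrix]
  have hkD : IsUnit (k • 1 - D).det := by
    have hkD_root : ¬ D.charpoly.IsRoot k := by
      rw [← rootMultiplicity_pos D.charpoly_monic.ne_zero]
      rw [hchar, rootMultiplicity_mul (hchar ▸ A.charpoly_monic.ne_zero),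
        rootMultiplicity_X_sub_C_self] at hk
      lia
    rwa [isUnit_iff_ne_zero, smul_one_eq_diagonal, ← scalar_apply, ← eval_charpoly]
  refine ⟨D, hAD.trans (isConj_reindex _
    (isConj_fromBlocks_of_mul_sub_mul_eq (X := r * (k • 1 - D)⁻¹) ?_))⟩
  calc
    k • (1 : Matrix (Fin 1) (Fin 1) K) * (r * (k • 1 - D)⁻¹) - r * (k • 1 - D)⁻¹ * D
        = r * ((k • 1 - D)⁻¹ * (k • 1 - D)) := by
          rw [Matrix.mul_sub]
          simp [Matrix.mul_sub, Matrix.mul_assoc]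
    _ = r := by rw [nonsing_inv_mul _ hkD, Matrix.mul_one]

end Conjugacy

section Nilpotent

variable {K : Type*} [Field K]

theorem linearIndependent_pow_apply_of_pow_succ_apply_eq_zero {V : Type*} [AddCommGroup V]
    [Module K V] (f : Module.End K V) :
    ∀ {n : ℕ} {v : V}, (f ^ n) v ≠ 0 → (f ^ (n + 1)) v = 0 →
      LinearIndependent K fun i : Fin (n + 1) => (f ^ (i : ℕ)) v
  | 0, _, hv, _ => .of_subsingleton (ι := Fin 1) 0 hv
  | n + 1, v, hv, hv' => by
    have htail := linearIndependent_pow_apply_of_pow_succ_apply_eq_zero f (n := n) (v := f v)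
      (by simpa [pow_succ] using hv) (by simpa [pow_succ] using hv')
    have hkill : Submodule.span K (Set.range fun i : Fin (n + 1) => (f ^ (i : ℕ)) (f v)) ≤
        (f ^ (n + 1)).ker := by
      rw [Submodule.span_le]
      rintro _ ⟨i, rfl⟩
      rw [SetLike.mem_coe, LinearMap.mem_ker, ← Module.End.mul_apply, ← Module.End.mul_apply,
        mul_assoc, ← pow_succ, ← pow_add, show n + 1 + (i + 1) = i + (n + 1 + 1) by ring, pow_add,
        Module.End.mul_apply, hv', map_zero]
    convert htail.finCons (x := v) fun h => hv (hkill h) using 1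
    ext i
    refine Fin.cases ?_ (fun j => ?_) i <;> simp [pow_succ]

theorem exists_mulVec_ne_zero {R m n : Type*} [NonAssocSemiring R] [Fintype n]
    {A : Matrix m n R} (hA : A ≠ 0) : ∃ v, A *ᵥ v ≠ 0 := by
  classical
  by_contra! h
  exact hA (ext_of_mulVec_single fun i => by simp only [h, zero_mulVec])

/-- The nilpotent Jordan block of size `n`, with ones on the superdiagonal. -/
def nilpotentJordanBlock (K : Type*) [Zero K] [One K] (n : ℕ) : Matrix (Fin n) (Fin n) K :=
  of fun i j => if (i : ℕ) + 1 = j then 1 else 0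

theorem isConj_nilpotentJordanBlock {n : ℕ} {N : Matrix (Fin (n + 1)) (Fin (n + 1)) K}
    (hN : N ^ n ≠ 0) (hN' : N ^ (n + 1) = 0) : IsConj N (nilpotentJordanBlock K (n + 1)) := by
  obtain ⟨v, hv⟩ := exists_mulVec_ne_zero hN
  have hchain : LinearIndependent K fun i : Fin (n + 1) => (N ^ (i : ℕ)) *ᵥ v := by
    simpa [← toLin'_pow] using linearIndependent_pow_apply_of_pow_succ_apply_eq_zero
      N.toLin' (n := n) (v := v) (by simpa [← toLin'_pow] using hv) (by simp [← toLin'_pow, hN'])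
  refine isConj_of_linearIndependent (hchain.comp Fin.rev Fin.rev_injective) fun j => ?_
  simp only [Function.comp_apply, mulVec_mulVec, ← pow_succ']
  refine Fin.cases ?_ (fun j => ?_) j
  · simp [hN', nilpotentJordanBlock]
  · rw [Finset.sum_eq_single j.castSucc]
    · have : n - (j + 1) + 1 = n - j := by lia
      simp [nilpotentJordanBlock, this]
    · intro i _ hi
      have : (i : ℕ) ≠ j := fun h => hi (Fin.ext h)
      simp [nilpotentJordanBlock, this]
    · simp

theorem isConj_of_sq_eq_zero_of_ne_zero {N : Matrix (Fin 3) (Fin 3) K} (hN : N ≠ 0)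
    (hN' : N ^ 2 = 0) : IsConj N !![0, 0, 0; 0, 0, 1; 0, 0, 0] := by
  obtain ⟨v, hv⟩ := exists_mulVec_ne_zero hN
  have hNN (x) : N *ᵥ N *ᵥ x = 0 := by rw [mulVec_mulVec, ← pow_two, hN', zero_mulVec]
  have hrange : N.toLin'.range ≤ N.toLin'.ker := by
    rintro _ ⟨x, rfl⟩
    simpa using hNN x
  have hker : 2 ≤ Module.finrank K N.toLin'.ker := by
    have := N.toLin'.finrank_range_add_finrank_ker
    have := Submodule.finrank_mono hrange
    simp only [Module.finrank_fin_fun] at *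
    lia
  have hlt : K ∙ (N *ᵥ v) < N.toLin'.ker := by
    refine Submodule.lt_of_le_of_finrank_lt_finrank ?_ (by rw [finrank_span_singleton hv]; lia)
    simpa [Submodule.span_singleton_le_iff_mem] using hNN v
  obtain ⟨w, hw, hwv⟩ := SetLike.exists_of_lt hlt
  have hw : N *ᵥ w = 0 := by simpa using hw
  have hbasis : LinearIndependent K ![w, N *ᵥ v, v] := by
    rw [Fintype.linearIndependent_iff]
    intro c hc
    simp only [Fin.sum_univ_three, cons_val] at hc
    have hc₂ : c 2 = 0 := by
      simpa [mulVec_add, mulVec_smul, hw, hNN, hv] using congrArg (N *ᵥ ·) hc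
    have hc₀ : c 0 = 0 := by
      by_contra h
      refine hwv (Submodule.mem_span_singleton.2 ⟨-(c 0)⁻¹ * c 1, ?_⟩)
      rw [hc₂, zero_smul, add_zero, ← eq_neg_iff_add_eq_zero] at hc
      rw [mul_smul, neg_smul, ← smul_neg, ← hc, inv_smul_smul₀ h]
    have hc₁ : c 1 = 0 := by simpa [hc₀, hc₂, hv] using hc
    simp [Fin.forall_fin_succ, hc₀, hc₁, hc₂]
  refine isConj_of_linearIndependent hbasis fun j => ?_
  fin_cases j <;> simp [Fin.sum_univ_three, hw, hNN]

end Nilpotent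

section Dichotomy

variable {K : Type*} [Field K] {l : ℕ}

theorem exists_isConj_fromBlocks_or_pow_sub_smul_one_eq_zero
    {A : Matrix (Fin (1 + l)) (Fin (1 + l)) K} (hl : l ≤ 2) (hroot : ∃ k, A.charpoly.IsRoot k) :
    ∃ k, A.charpoly.IsRoot k ∧
      ((∃ D : Matrix (Fin l) (Fin l) K,
        IsConj A (reindex finSumFinEquiv finSumFinEquiv (fromBlocks (k • 1) 0 0 D))) ∨
      (A - k • 1) ^ (1 + l) = 0) := by
  have hdeg : A.charpoly.natDegree = 1 + l := by simp [charpoly_natDegree_eq_dim]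
  obtain ⟨k, hk, hsimple | hpow⟩ :=
    exists_isRoot_rootMultiplicity_eq_one_or_eq_pow A.charpoly_monic (by lia) hroot
  · exact ⟨k, hk, .inl (exists_isConj_fromBlocks_of_rootMultiplicity_eq_one hsimple)⟩
  · refine ⟨k, hk, .inr ?_⟩
    have hCH := A.aeval_self_charpoly
    rw [hpow, hdeg] at hCH
    simpa [Algebra.algebraMap_eq_smul_one] using hCH

end Dichotomy

section TwoByTwo

open Polynomial

variable {R : Type*} [Field R]

theorem sub_smul_one_sq_eq_discr [NeZero (2 : R)] (A : Matrix (Fin 2) (Fin 2) R) :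
    (A - (A.trace / 2) • 1) ^ 2 = (A.discr / 2 ^ 2) • 1 := by
  have h2 : (2 : R) ≠ 0 := NeZero.ne 2
  rw [pow_two, discr_fin_two, trace_fin_two, det_fin_two]
  ext i j
  fin_cases i <;> fin_cases j <;> simp [mul_apply, Fin.sum_univ_two] <;> field_simp <;> ring

theorem exists_isRoot_charpoly_of_isSquare_discr [NeZero (2 : R)] {A : Matrix (Fin 2) (Fin 2) R}
    (h : IsSquare A.discr) : ∃ k, A.charpoly.IsRoot k := by
  obtain ⟨s, hs⟩ := h
  rw [discr_fin_two] at hs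
  refine ⟨(A.trace + s) / 2, ?_⟩
  have h2 : (2 : R) ≠ 0 := NeZero.ne 2
  simp only [charpoly_fin_two, IsRoot, eval_add, eval_sub, eval_mul, eval_pow, eval_X, eval_C]
  field_simp
  linear_combination -hs

theorem isConj_of_sq_eq_smul_one {J : Matrix (Fin 2) (Fin 2) R} {b : R}
    (hJ : J ^ 2 = -(b * b) • 1) (hb : ¬ IsSquare (-(b * b))) : IsConj J !![0, -b; b, 0] := by
  have hb0 : b ≠ 0 := by
    rintro rfl
    simp at hb
  have hJJ (x) : J *ᵥ J *ᵥ x = -(b * b) • x := by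
    rw [mulVec_mulVec, ← pow_two, hJ, smul_mulVec, one_mulVec]
  obtain ⟨v, hv⟩ := exists_ne (0 : Fin 2 → R)
  have hnot (c : R) : c • v ≠ J *ᵥ v := by
    intro hc
    have hcc := hJJ v
    rw [← hc, mulVec_smul, ← hc, smul_smul] at hcc
    exact hb ⟨c, (smul_left_injective R hv hcc).symm⟩
  have hbasis : LinearIndependent R ![v, b⁻¹ • J *ᵥ v] := by
    refine (LinearIndependent.pair_iff' hv).2 fun c hc => hnot (b * c) ?_
    rw [mul_smul, hc, smul_inv_smul₀ hb0]
  refine isConj_of_linearIndependent hbasis fun j => ?_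
  rw [Fin.sum_univ_two]
  match j with
  | 0 => simp [hb0]
  | 1 =>
    simp only [cons_val, mulVec_smul, hJJ, smul_smul]
    simp [hb0]

theorem exists_isConj_of_not_isSquare_discr [NeZero (2 : R)] {A : Matrix (Fin 2) (Fin 2) R}
    (h : ¬ IsSquare A.discr) (h' : IsSquare (-A.discr)) :
    ∃ a b : R, b ≠ 0 ∧ IsConj A !![a, -b; b, a] := by
  obtain ⟨s, hs⟩ := h'
  have h2 : (2 : R) ≠ 0 := NeZero.ne 2
  have hs0 : s ≠ 0 := by
    rintro rfl
    exact h (by simp_all)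
  have hdiscr : A.discr / 2 ^ 2 = -(s / 2 * (s / 2)) := by
    rw [neg_eq_iff_eq_neg.1 hs]
    field_simp
  have hnot : ¬ IsSquare (-(s / 2 * (s / 2))) := by
    rintro ⟨c, hc⟩
    rw [← hdiscr, div_eq_iff (pow_ne_zero 2 h2)] at hc
    exact h ⟨2 * c, by rw [hc]; ring⟩
  refine ⟨A.trace / 2, s / 2, div_ne_zero hs0 h2, ?_⟩
  convert isConj_smul_one_add (A.trace / 2)
    (isConj_of_sq_eq_smul_one ((sub_smul_one_sq_eq_discr A).trans (by rw [hdiscr])) hnot) using 1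
  · simp
  · ext i j
    fin_cases i <;> fin_cases j <;> simp

theorem exists_isConj_fin_two [IsRealClosed R] (A : Matrix (Fin 2) (Fin 2) R) :
    ∃ a b : R, IsConj A (diagonal ![a, b]) ∨ IsConj A !![a, 1; 0, a] ∨
      (b ≠ 0 ∧ IsConj A !![a, -b; b, a]) := by
  by_cases hA : IsSquare A.discr
  · obtain ⟨k, -, ⟨D, hD⟩ | hk⟩ := exists_isConj_fromBlocks_or_pow_sub_smul_one_eq_zero
      (l := 1) (by norm_num) (exists_isRoot_charpoly_of_isSquare_discr hA)
    · refine ⟨k, D 0 0, .inl ?_⟩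
      convert hD using 1
      ext i j
      fin_cases i <;> fin_cases j <;> simp [finSumFinEquiv, Fin.addCases]
    · have hAk : A = k • 1 + (A - k • 1) := (add_sub_cancel _ _).symm
      by_cases hN : A - k • 1 = 0
      · have hdiag : A = diagonal ![k, k] := by
          rw [sub_eq_zero.1 hN]
          ext i j
          fin_cases i <;> fin_cases j <;> simp
        exact ⟨k, k, .inl (hdiag ▸ IsConj.refl _)⟩
      · refine ⟨k, 0, .inr (.inl ?_)⟩
        convert isConj_smul_one_add k (isConj_nilpotentJordanBlock (by simpa using hN) hk) using 1
        ext i j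
        fin_cases i <;> fin_cases j <;> simp [nilpotentJordanBlock]
  · obtain ⟨a, b, hb, hAab⟩ := exists_isConj_of_not_isSquare_discr hA
      ((IsRealClosed.isSquare_or_isSquare_neg _).resolve_left hA)
    exact ⟨a, b, .inr (.inr ⟨hb, hAab⟩)⟩

end TwoByTwo

section ThreeByThree

variable {R : Type*} [Field R]

/-- The canonical forms, up to conjugation and scaling, of an invertible `3 × 3` matrix over a real
closed field; the scale is fixed by giving the matrix the eigenvalue `1`. Not every matrix of these
shapes is invertible. -/
def IsCanonicalBlock (M : Matrix (Fin 3) (Fin 3) R) : Prop :=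
  ∃ l2 l3 : R,
    M = diagonal ![1, l2, l3] ∨
    M = !![1, 0, 0; 0, l2, 1; 0, 0, l2] ∨
    M = !![1, 1, 0; 0, 1, 1; 0, 0, 1] ∨
    (l3 ≠ 0 ∧ M = !![1, 0, 0; 0, l2, -l3; 0, l3, l2])

theorem exists_isCanonicalBlock_isConj_one_add {N : Matrix (Fin 3) (Fin 3) R} (hN : N ^ 3 = 0) :
    ∃ M, IsCanonicalBlock M ∧ IsConj (1 + N) M := by
  by_cases hN₂ : N ^ 2 = 0
  · by_cases hN₁ : N = 0
    · refine ⟨1 + N, ⟨1, 1, .inl ?_⟩, .refl _⟩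
      ext i j
      fin_cases i <;> fin_cases j <;> simp [hN₁]
    · refine ⟨_, ⟨1, 0, .inr (.inl rfl)⟩, ?_⟩
      convert isConj_smul_one_add (1 : R) (isConj_of_sq_eq_zero_of_ne_zero hN₁ hN₂) using 1
      · simp
      · ext i j
        fin_cases i <;> fin_cases j <;> simp
  · refine ⟨_, ⟨0, 0, .inr (.inr (.inl rfl))⟩, ?_⟩
    convert isConj_smul_one_add (1 : R) (isConj_nilpotentJordanBlock hN₂ hN) using 1
    · simp
    · ext i j
      fin_cases i <;> fin_cases j <;> simp [nilpotentJordanBlock]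

variable [IsRealClosed R]

theorem exists_isCanonicalBlock_isConj_fromBlocks (D : Matrix (Fin 2) (Fin 2) R) :
    ∃ M, IsCanonicalBlock M ∧
      IsConj (reindex finSumFinEquiv finSumFinEquiv
        (fromBlocks (1 : Matrix (Fin 1) (Fin 1) R) 0 0 D)) M := by
  have hconj {E : Matrix (Fin 2) (Fin 2) R} (h : IsConj D E) :=
    isConj_reindex finSumFinEquiv
      (isConj_fromBlocks_diagonal_right (1 : Matrix (Fin 1) (Fin 1) R) h)
  obtain ⟨a, b, h | h | ⟨hb, h⟩⟩ := exists_isConj_fin_two D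
  · refine ⟨_, ⟨a, b, .inl ?_⟩, hconj h⟩
    ext i j
    fin_cases i <;> fin_cases j <;> simp [finSumFinEquiv, Fin.addCases]
  · refine ⟨_, ⟨a, b, .inr (.inl ?_)⟩, hconj h⟩
    ext i j
    fin_cases i <;> fin_cases j <;> simp [finSumFinEquiv, Fin.addCases]
  · refine ⟨_, ⟨a, b, .inr (.inr (.inr ⟨hb, ?_⟩))⟩, hconj h⟩
    ext i j
    fin_cases i <;> fin_cases j <;> simp [finSumFinEquiv, Fin.addCases]

theorem exists_isCanonicalBlock_isConj_smul {A : Matrix (Fin 3) (Fin 3) R} (hA : IsUnit A) :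
    ∃ (c : R) (M : Matrix (Fin 3) (Fin 3) R), c ≠ 0 ∧ IsCanonicalBlock M ∧ IsConj A (c • M) := by
  obtain ⟨k, hk, hA'⟩ := exists_isConj_fromBlocks_or_pow_sub_smul_one_eq_zero (l := 2) le_rfl
    (IsRealClosed.exists_isRoot_of_odd_natDegree (f := A.charpoly) (by
      rw [charpoly_natDegree_eq_dim]; decide))
  have hk0 : k ≠ 0 :=
    spectrum.ne_zero_of_mem_of_unit (a := hA.unit) (mem_spectrum_iff_isRoot_charpoly.2 hk)
  suffices ∃ B M : Matrix (Fin 3) (Fin 3) R, IsCanonicalBlock M ∧ IsConj B M ∧ IsConj A (k • B) by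
    obtain ⟨B, M, hM, hBM, hAB⟩ := this
    exact ⟨k, M, hk0, hM, hAB.trans (isConj_smul k hBM)⟩
  obtain ⟨D, hD⟩ | hN := hA'
  · obtain ⟨M, hM, hBM⟩ := exists_isCanonicalBlock_isConj_fromBlocks (k⁻¹ • D)
    refine ⟨_, M, hM, hBM, ?_⟩
    convert hD using 1
    have hscale : fromBlocks (k • 1) 0 0 D =
        k • fromBlocks (1 : Matrix (Fin 1) (Fin 1) R) 0 0 (k⁻¹ • D) := by
      rw [fromBlocks_smul, smul_inv_smul₀ hk0, smul_zero, smul_zero]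
    rw [hscale]
    rfl
  · obtain ⟨M, hM, hBM⟩ := exists_isCanonicalBlock_isConj_one_add (N := k⁻¹ • (A - k • 1))
      (by rw [smul_pow, hN, smul_zero])
    refine ⟨_, M, hM, hBM, ?_⟩
    rw [smul_add, smul_inv_smul₀ hk0, add_sub_cancel]

end ThreeByThree

section Adjugate

theorem exists_transpose_mul_mul_adjugate_transpose {R n : Type*} [Field R] [IsRealClosed R]
    [Fintype n] [DecidableEq n] (hn : Odd (Fintype.card n)) {B M : Matrix n n R} {c : R}
    (hc : c ≠ 0) (h : IsConj B (c • M)) :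
    ∃ A : Matrix n n R, IsUnit A.det ∧ Aᵀ * B * A.adjugateᵀ = M := by
  obtain ⟨u, hu⟩ := h
  set P := (u : Matrix n n R)
  have hdet : P.det ≠ 0 := ((isUnit_iff_isUnit_det _).1 u.isUnit).ne_zero
  obtain ⟨t, ht⟩ := IsRealClosed.exists_eq_pow_of_odd (c * P.det)⁻¹ hn
  have ht0 : t ≠ 0 := by
    rintro rfl
    rw [zero_pow hn.pos.ne', inv_eq_zero] at ht
    exact mul_ne_zero hc hdet ht
  refine ⟨t • Pᵀ, ?_, ?_⟩
  · rw [det_smul, det_transpose]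
    exact (mul_ne_zero (pow_ne_zero _ ht0) hdet).isUnit
  · have ht' : t ^ (Fintype.card n - 1) * t = (c * P.det)⁻¹ := by
      rw [pow_sub_one_mul hn.pos.ne', ht]
    calc
      (t • Pᵀ)ᵀ * B * (t • Pᵀ).adjugateᵀ
          = (t ^ (Fintype.card n - 1) * t) • (P * B * P.adjugate) := by
            simp [adjugate_smul, ← adjugate_transpose, smul_smul]
      _ = (c * P.det)⁻¹ • (c * P.det) • M := by
            rw [ht', hu.eq, Matrix.mul_assoc, mul_adjugate]
            simp [smul_smul, mul_comm]
      _ = M := inv_smul_smul₀ (mul_ne_zero hc hdet) M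

end Adjugate

section Automorphisms

theorem adjugate_transpose_mulVec_crossProduct {R : Type*} [CommRing R]
    (A : Matrix (Fin 3) (Fin 3) R) (u v : Fin 3 → R) :
    A.adjugateᵀ *ᵥ (u ⨯₃ v) = (A *ᵥ u) ⨯₃ (A *ᵥ v) := by
  ext i
  fin_cases i <;>
    simp [cross_apply, adjugate_fin_three, mulVec, dotProduct, Fin.sum_univ_three] <;> ring

theorem bra_eq_sumElim_crossProduct (x y : Fin 6 → ℝ) :
    bra x y =
      Sum.elim (0 : Fin 3 → ℝ)
        ((x ∘ finSumFinEquiv (m := 3) (n := 3) ∘ Sum.inl) ⨯₃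
          (y ∘ finSumFinEquiv (m := 3) (n := 3) ∘ Sum.inl)) ∘ finSumFinEquiv.symm := by
  ext i
  fin_cases i <;> simp [bra, cross_apply, finSumFinEquiv, Fin.addCases]

theorem isAuto_reindex_fromBlocks {A : Matrix (Fin 3) (Fin 3) ℝ} (hA : IsUnit A.det)
    (C : Matrix (Fin 3) (Fin 3) ℝ) :
    IsAuto (reindex finSumFinEquiv finSumFinEquiv (fromBlocks A 0 C A.adjugateᵀ)) := by
  set F := reindex finSumFinEquiv finSumFinEquiv (fromBlocks A 0 C A.adjugateᵀ)
  have hFunit : IsUnit F := by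
    rw [isUnit_iff_isUnit_det, det_reindex_self, det_fromBlocks_zero₁₂, det_transpose,
      det_adjugate]
    exact hA.mul (hA.pow _)
  have hFmul (z : Fin 6 → ℝ) :
      F *ᵥ z = (fromBlocks A 0 C A.adjugateᵀ *ᵥ (z ∘ finSumFinEquiv)) ∘ finSumFinEquiv.symm :=
    submatrix_mulVec_equiv _ _ _ _
  refine ⟨⟨mulVec_injective_iff_isUnit.2 hFunit, mulVec_surjective_iff_isUnit.2 hFunit⟩,
    fun x y => ?_⟩
  have hleft (z : Fin 6 → ℝ) : (F *ᵥ z) ∘ finSumFinEquiv (m := 3) (n := 3) ∘ Sum.inl =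
      A *ᵥ (z ∘ finSumFinEquiv (m := 3) (n := 3) ∘ Sum.inl) := by
    rw [hFmul]
    ext i
    simp [fromBlocks_mulVec, Function.comp_assoc]
  rw [bra_eq_sumElim_crossProduct, bra_eq_sumElim_crossProduct, hleft, hleft, hFmul,
    ← adjugate_transpose_mulVec_crossProduct]
  simp [fromBlocks_mulVec, Function.comp_assoc]

end Automorphisms

section Congruence

variable {R n : Type*} [CommRing R] [Fintype n]

theorem transpose_reindex_mul_reindex_mul_reindex {m : Type*} [Fintype m] (e : m ≃ n)
    (Q G : Matrix m m R) :
    (reindex e e Q)ᵀ * reindex e e G * reindex e e Q = reindex e e (Qᵀ * G * Q) := by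
  rw [transpose_reindex, reindex_apply, reindex_apply, reindex_apply, submatrix_mul_equiv,
    submatrix_mul_equiv, reindex_apply]

theorem transpose_fromBlocks_mul_fromBlocks_mul [Invertible (2 : R)] {S B A X : Matrix n n R}
    (hS : S.IsSymm) (hX : B * X = -(⅟2 : R) • (S * A)) (D : Matrix n n R) :
    (fromBlocks A 0 X D)ᵀ * fromBlocks S B Bᵀ 0 * fromBlocks A 0 X D =
      fromBlocks 0 (Aᵀ * B * D) (Aᵀ * B * D)ᵀ 0 := by
  have hX' : Xᵀ * Bᵀ = -(⅟2 : R) • (Aᵀ * S) := by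
    rw [← transpose_mul, hX, transpose_smul, transpose_mul, hS]
  have hcancel : (Aᵀ * S + Xᵀ * Bᵀ) * A + Aᵀ * B * X = 0 := by
    rw [Matrix.mul_assoc _ B X, hX, hX', Matrix.add_mul, Matrix.smul_mul, Matrix.mul_smul,
      ← Matrix.mul_assoc, add_assoc, ← add_smul, ← neg_add, invOf_two_add_invOf_two,
      neg_one_smul, add_neg_cancel]
  rw [fromBlocks_transpose, fromBlocks_multiply, fromBlocks_multiply]
  simp [hcancel, ← Matrix.mul_assoc]

variable [DecidableEq n]

theorem isUnit_det_of_isUnit_det_transpose_mul_mul {Q G : Matrix n n R}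
    (h : IsUnit (Qᵀ * G * Q).det) : IsUnit Q.det := by
  rw [det_mul] at h
  exact isUnit_of_mul_isUnit_right h

theorem exists_transpose_mul_fromBlocks_mul_eq_one_neg_one [Invertible (2 : R)]
    {S B : Matrix n n R} (hS : S.IsSymm) (hB : IsUnit B.det) :
    ∃ Q, IsUnit Q.det ∧ Qᵀ * fromBlocks S B Bᵀ 0 * Q = fromBlocks 1 0 0 (-1) := by
  suffices ∃ Q, Qᵀ * fromBlocks S B Bᵀ 0 * Q = fromBlocks 1 0 0 (-1) by
    obtain ⟨Q, hQ⟩ := this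
    refine ⟨Q, isUnit_det_of_isUnit_det_transpose_mul_mul (G := fromBlocks S B Bᵀ 0) ?_, hQ⟩
    rw [hQ, det_fromBlocks_zero₂₁, det_one, one_mul, det_neg, det_one, mul_one]
    exact isUnit_one.neg.pow _
  set P : Matrix (n ⊕ n) (n ⊕ n) R := fromBlocks 1 1 ((⅟2 : R) • 1) (-(⅟2 : R) • 1) with hP
  have hyperbolic : Pᵀ * fromBlocks 0 1 1 0 * P = fromBlocks 1 0 0 (-1) := by
    simp only [hP, fromBlocks_transpose, fromBlocks_multiply]
    congr 1 <;> simp [← neg_add, ← add_smul, invOf_two_add_invOf_two]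
  have hX : B * (-(⅟2 : R) • (B⁻¹ * S)) = -(⅟2 : R) • (S * 1) := by
    rw [Matrix.mul_smul, mul_nonsing_inv_cancel_left _ _ hB, Matrix.mul_one]
  refine ⟨fromBlocks 1 0 (-(⅟2 : R) • (B⁻¹ * S)) B⁻¹ * P, ?_⟩
  calc
    _ = Pᵀ * ((fromBlocks 1 0 (-(⅟2 : R) • (B⁻¹ * S)) B⁻¹)ᵀ * fromBlocks S B Bᵀ 0 *
          fromBlocks 1 0 (-(⅟2 : R) • (B⁻¹ * S)) B⁻¹) * P := by
        simp only [transpose_mul, Matrix.mul_assoc]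
    _ = _ := by
        rw [transpose_fromBlocks_mul_fromBlocks_mul hS hX, transpose_one, Matrix.one_mul,
          mul_nonsing_inv _ hB, transpose_one, hyperbolic]

theorem isUnit_of_isUnit_fromBlocks_zero₂₂ {S B C : Matrix n n R}
    (h : IsUnit (fromBlocks S B C 0)) : IsUnit B := by
  have hswap : IsUnit (fromBlocks B S 0 C) := by
    have := (isUnit_submatrix_equiv (Equiv.refl _) (Equiv.sumComm n n)).2 h
    simpa [fromBlocks_submatrix_sum_swap_right] using this
  exact (isUnit_fromBlocks_zero₂₁.1 hswap).1

end Congruence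

section Gram

theorem of_apply_mulVec_single_eq {R n : Type*} [CommRing R] [Fintype n] [DecidableEq n]
    (g : (n → R) →ₗ[R] (n → R) →ₗ[R] R) (F : Matrix n n R) :
    (of fun i j => g (F *ᵥ Pi.single i 1) (F *ᵥ Pi.single j 1)) =
      Fᵀ * LinearMap.toMatrix₂' R g * F := by
  have := LinearMap.toMatrix₂'_compl₁₂ g F.toLin' F.toLin'
  rw [LinearMap.toMatrix'_toLin'] at this
  rw [← this]
  ext i j
  simp [LinearMap.toMatrix₂'_apply]

theorem reindex_fromBlocks_one_neg_one {R : Type*} [CommRing R] :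
    reindex finSumFinEquiv finSumFinEquiv
        (fromBlocks (1 : Matrix (Fin 3) (Fin 3) R) 0 0 (-1 : Matrix (Fin 3) (Fin 3) R)) =
      diagonal ![1, 1, 1, -1, -1, -1] := by
  rw [← diagonal_one, diagonal_neg, fromBlocks_diagonal, reindex_apply, submatrix_diagonal_equiv]
  congr 1
  ext i
  fin_cases i <;> simp [finSumFinEquiv, Fin.addCases]

theorem exists_toMatrix₂'_eq_reindex_fromBlocks {g : (Fin 6 → ℝ) →ₗ[ℝ] (Fin 6 → ℝ) →ₗ[ℝ] ℝ}
    (hsym : ∀ x y, g x y = g y x) (hnd : ∀ x, (∀ y, g x y = 0) → x = 0)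
    (hvan : ∀ x ∈ gder, ∀ y ∈ gder, g x y = 0) :
    ∃ S B : Matrix (Fin 3) (Fin 3) ℝ, S.IsSymm ∧ IsUnit B.det ∧
      LinearMap.toMatrix₂' ℝ g =
        reindex finSumFinEquiv finSumFinEquiv (fromBlocks S B Bᵀ 0) := by
  set G : Matrix (Fin 3 ⊕ Fin 3) (Fin 3 ⊕ Fin 3) ℝ :=
    reindex finSumFinEquiv.symm finSumFinEquiv.symm (LinearMap.toMatrix₂' ℝ g) with hG
  have hgder (i : Fin 3) : Pi.single (Fin.natAdd 3 i) (1 : ℝ) ∈ gder := by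
    refine Submodule.subset_span ?_
    fin_cases i <;> simp
  have hGapply (i j) :
      G i j = g (Pi.single (finSumFinEquiv i) 1) (Pi.single (finSumFinEquiv j) 1) := by
    simp [hG, LinearMap.toMatrix₂'_apply]
  have hGsymm (i j) : G i j = G j i := by rw [hGapply, hGapply, hsym]
  have hG₂₁ : G.toBlocks₂₁ = G.toBlocks₁₂ᵀ := by ext i j; exact hGsymm _ _
  have hG₂₂ : G.toBlocks₂₂ = 0 := by
    ext i j
    exact (hGapply _ _).trans (hvan _ (hgder i) _ (hgder j))
  have hblocks : G = fromBlocks G.toBlocks₁₁ G.toBlocks₁₂ G.toBlocks₁₂ᵀ 0 := by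
    rw [← hG₂₁, ← hG₂₂, fromBlocks_toBlocks]
  have hGunit : IsUnit G := by
    rw [isUnit_iff_isUnit_det, hG, det_reindex_self, isUnit_iff_ne_zero,
      ← Matrix.separatingLeft_iff_det_ne_zero,
      LinearMap.separatingLeft_toMatrix₂'_iff]
    exact hnd
  refine ⟨G.toBlocks₁₁, G.toBlocks₁₂, ?_, ?_, ?_⟩
  · ext i j; exact hGsymm _ _
  · rw [← isUnit_iff_isUnit_det]
    exact isUnit_of_isUnit_fromBlocks_zero₂₂ (hblocks ▸ hGunit)
  · rw [← hblocks]
    simp [hG]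

end Gram

/-- A nondegenerate symmetric bilinear form on `T*𝔥₃` vanishing on `𝔤′ × 𝔤′` can be
brought by an automorphism to the block form `[[0,M],[Mᵀ,0]]` with `M` in one of four
canonical forms; in particular every such form has neutral signature `(3,3)`. -/
theorem stmt_7 (g : (Fin 6 → ℝ) →ₗ[ℝ] (Fin 6 → ℝ) →ₗ[ℝ] ℝ)
    (hsym : ∀ x y, g x y = g y x)
    (hnd : ∀ x, (∀ y, g x y = 0) → x = 0)
    (hvan : ∀ x ∈ gder, ∀ y ∈ gder, g x y = 0) :
    (∃ F : Matrix (Fin 6) (Fin 6) ℝ, IsAuto F ∧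
      ∃ M : Matrix (Fin 3) (Fin 3) ℝ,
        (∃ l2 l3 : ℝ,
          M = Matrix.diagonal ![1, l2, l3] ∨
          M = !![1, 0, 0; 0, l2, 1; 0, 0, l2] ∨
          M = !![1, 1, 0; 0, 1, 1; 0, 0, 1] ∨
          (l3 ≠ 0 ∧ M = !![1, 0, 0; 0, l2, -l3; 0, l3, l2])) ∧
        (Matrix.of fun i j : Fin 6 =>
            g (F.mulVec (Pi.single i 1)) (F.mulVec (Pi.single j 1))) =
          Matrix.reindex finSumFinEquiv finSumFinEquiv (Matrix.fromBlocks 0 M Mᵀ 0)) ∧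
    (∃ Q : Matrix (Fin 6) (Fin 6) ℝ, IsUnit Q.det ∧
      Qᵀ * (Matrix.of fun i j : Fin 6 => g (Pi.single i 1) (Pi.single j 1)) * Q =
        Matrix.diagonal ![1, 1, 1, -1, -1, -1]) := by
  obtain ⟨S, B, hS, hB, hG⟩ := exists_toMatrix₂'_eq_reindex_fromBlocks hsym hnd hvan
  refine ⟨?_, ?_⟩
  · obtain ⟨c, M, hc, hM, hBM⟩ :=
      exists_isCanonicalBlock_isConj_smul ((isUnit_iff_isUnit_det B).2 hB)
    obtain ⟨A, hA, hAM⟩ := exists_transpose_mul_mul_adjugate_transpose (by decide) hc hBM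
    have hX : B * (-(⅟2 : ℝ) • (B⁻¹ * (S * A))) = -(⅟2 : ℝ) • (S * A) := by
      rw [Matrix.mul_smul, mul_nonsing_inv_cancel_left _ _ hB]
    refine ⟨_, isAuto_reindex_fromBlocks hA (-(⅟2 : ℝ) • (B⁻¹ * (S * A))), M, hM, ?_⟩
    rw [of_apply_mulVec_single_eq, hG, transpose_reindex_mul_reindex_mul_reindex,
      transpose_fromBlocks_mul_fromBlocks_mul hS hX, hAM]
  · obtain ⟨Q, hQdet, hQ⟩ := exists_transpose_mul_fromBlocks_mul_eq_one_neg_one hS hB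
    have hQ' := transpose_reindex_mul_reindex_mul_reindex finSumFinEquiv Q (fromBlocks S B Bᵀ 0)
    rw [hQ, ← hG, reindex_fromBlocks_one_neg_one] at hQ'
    have hgram : (of fun i j => g (Pi.single i 1) (Pi.single j 1)) = LinearMap.toMatrix₂' ℝ g := by
      ext i j
      exact (LinearMap.toMatrix₂'_apply g i j).symm
    exact ⟨_, (det_reindex_self finSumFinEquiv Q).symm ▸ hQdet, hgram ▸ hQ'⟩
end
end

section
/- Let ε₁, ε₂ ∈ {+1, −1}, let E₁₀ = diag(0,0,1), and let M be a real 3×3 matrix of one of the forms diag(m₁₁, m₂₂, 0), [[m₁₁, m₁₂, 0],[−m₁₂, m₁₁, 0],[0,0,0]], or [[m₁₁, 0, 0],[1, m₁₁, 0],[0,0,0]]. Let ⟨·,·⟩ be the symmetric bilinear form on T*𝔥₃ whose matrix in the basis (e₁,…,e₆) is the block matrix [[ε₁E₁₀, M],[Mᵀ, ε₂E₁₀]], and assume this form is nondegenerate. Then the associated metric is locally symmetric and Ricci-flat: ∇R = 0 and ρ = 0. -/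
/-!
Give `e₁, e₂` weight 1, `e₃, e₆` weight 2 and `e₄, e₅` weight 3, and let `F i` be the span of the
basis vectors of weight at least `i`. The bracket maps `F i × F j` into `F (i + j)`, and since the
metric only pairs basis vectors whose weights add up to 4, nondegeneracy gives
`(F i)^⊥ = F (5 - i)`. By duality the Koszul formula then forces `∇` to map `F i × F j` into
`F (i + j)` as well. So `∇R` takes values in `F 4 = 0`, while `z ↦ R(z,x)y` raises weights by 2
and hence has trace zero.
-/

open Matrix

noncomputable section

/-- The bilinear form associated to the matrix `A`. -/
def gm (A : Matrix (Fin 6) (Fin 6) ℝ) (x y : Fin 6 → ℝ) : ℝ := x ⬝ᵥ A.mulVec y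

/-- Curvature `R(x,y)z = ∇ₓ∇_y z − ∇_y∇ₓ z − ∇_{[x,y]} z` of a connection `D`. -/
def curv (D : (Fin 6 → ℝ) → (Fin 6 → ℝ) → (Fin 6 → ℝ)) (x y z : Fin 6 → ℝ) :
    Fin 6 → ℝ :=
  D x (D y z) - D y (D x z) - D (bra x y) z

/-- Ricci tensor `ρ(x,y) = tr(z ↦ R(z,x)y)`, computed in the standard basis. -/
def ricci (D : (Fin 6 → ℝ) → (Fin 6 → ℝ) → (Fin 6 → ℝ)) (x y : Fin 6 → ℝ) : ℝ :=
  ∑ i : Fin 6, curv D (Pi.single i 1) x y i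

/-- `E₁₀ = diag(0,0,1)`. -/
def E10 : Matrix (Fin 3) (Fin 3) ℝ := Matrix.diagonal ![0, 0, 1]

section Filtration

variable {V R : Type*} [AddCommGroup V] {F : ℕ → AddSubgroup V} {β D : V → V → V}
  {i j k l : ℕ} {x y z w : V}

/-- The operation `μ` is compatible with the filtration `F`: `μ (F i) (F j) ⊆ F (i + j)`. It
applies to the bracket and to the connection alike, so `μ` is a bare function. -/
def IsFilteredOp (F : ℕ → AddSubgroup V) (μ : V → V → V) : Prop :=
  ∀ ⦃i j x y⦄, x ∈ F i → y ∈ F j → μ x y ∈ F (i + j)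

/-- The curvature of a connection `D` on an algebra with bracket `β`; `curv` is the case
`β = bra`. -/
def curvature (β D : V → V → V) (x y z : V) : V :=
  D x (D y z) - D y (D x z) - D (β x y) z

/-- The covariant derivative `(∇_x R)(y, z) w` of the curvature. -/
def covDerivCurvature (β D : V → V → V) (x y z w : V) : V :=
  D x (curvature β D y z w) - curvature β D (D x y) z w - curvature β D y (D x z) w
    - curvature β D y z (D x w)

/-- The Koszul formula characterizing the Levi-Civita connection `D` of the form `B`. -/
def IsLeviCivita [Ring R] (β : V → V → V) (B : V → V → R) (D : V → V → V) : Prop :=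
  ∀ x y z, 2 * B (D x y) z = B (β x y) z - B (β y z) x + B (β z x) y

/-- Each `F i` is the left orthogonal of `F (N - i)` under the form `B`. Ranging over all `j` with
`N ≤ i + j` avoids the truncated subtraction. -/
def IsSelfDualFiltration [Zero R] (F : ℕ → AddSubgroup V) (B : V → V → R) (N : ℕ) : Prop :=
  ∀ i x, x ∈ F i ↔ ∀ j, N ≤ i + j → ∀ z ∈ F j, B x z = 0

theorem IsFilteredOp.curvature_mem (hβ : IsFilteredOp F β) (hD : IsFilteredOp F D)
    (hx : x ∈ F i) (hy : y ∈ F j) (hz : z ∈ F k) : curvature β D x y z ∈ F (i + j + k) := by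
  have hxyz : D x (D y z) ∈ F (i + j + k) := by
    simpa only [add_assoc] using hD hx (hD hy hz)
  have hyxz : D y (D x z) ∈ F (i + j + k) := by
    simpa only [add_assoc, add_left_comm] using hD hy (hD hx hz)
  exact sub_mem (sub_mem hxyz hyxz) (hD (hβ hx hy) hz)

theorem IsFilteredOp.covDerivCurvature_mem (hβ : IsFilteredOp F β) (hD : IsFilteredOp F D)
    (hx : x ∈ F i) (hy : y ∈ F j) (hz : z ∈ F k) (hw : w ∈ F l) :
    covDerivCurvature β D x y z w ∈ F (i + j + k + l) := by
  have hR : D x (curvature β D y z w) ∈ F (i + j + k + l) := by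
    simpa only [add_assoc] using hD hx (hβ.curvature_mem hD hy hz hw)
  have hRy : curvature β D (D x y) z w ∈ F (i + j + k + l) :=
    hβ.curvature_mem hD (hD hx hy) hz hw
  have hRz : curvature β D y (D x z) w ∈ F (i + j + k + l) := by
    simpa only [add_assoc, add_left_comm] using hβ.curvature_mem hD hy (hD hx hz) hw
  have hRw : curvature β D y z (D x w) ∈ F (i + j + k + l) := by
    simpa only [add_assoc, add_left_comm] using hβ.curvature_mem hD hy hz (hD hx hw)
  exact sub_mem (sub_mem (sub_mem hR hRy) hRz) hRw

theorem IsLeviCivita.isFilteredOp [Ring R] [NoZeroDivisors R] [NeZero (2 : R)]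
    {B : V → V → R} {N : ℕ} (hD : IsLeviCivita β B D) (hβ : IsFilteredOp F β)
    (hF : IsSelfDualFiltration F B N) : IsFilteredOp F D := by
  intro i j x y hx hy
  refine (hF _ _).2 fun k hk z hz ↦ ?_
  have hxy : B (β x y) z = 0 := (hF _ _).1 (hβ hx hy) k hk z hz
  have hyz : B (β y z) x = 0 := (hF _ _).1 (hβ hy hz) i (by lia) x hx
  have hzx : B (β z x) y = 0 := (hF _ _).1 (hβ hz hx) j (by lia) y hy
  have h2 : 2 * B (D x y) z = 0 := by rw [hD, hxy, hyz, hzx, sub_zero, add_zero]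
  exact (mul_eq_zero.1 h2).resolve_left two_ne_zero

end Filtration

section Weight

variable {ι R : Type*} {w : ι → ℕ} {i j : ℕ} {a b : ι}

/-- The filtration of `ι → R` by the spans of the basis vectors of weight at least `i`, encoded as
the vanishing of the coordinates of weight less than `i`. -/
def weightFiltration [AddGroup R] (w : ι → ℕ) (i : ℕ) : AddSubgroup (ι → R) :=
  AddSubgroup.pi {a | w a < i} fun _ ↦ ⊥

/-- The bilinear form with matrix `A` has degree `d`: it only pairs basis vectors whose weights add
up to `d`. -/
def IsWeightHomogeneous [Zero R] (w : ι → ℕ) (d : ℕ) (A : Matrix ι ι R) : Prop :=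
  ∀ a b, w a + w b ≠ d → A a b = 0

theorem mem_weightFiltration [AddGroup R] {x : ι → R} :
    x ∈ weightFiltration w i ↔ ∀ a, w a < i → x a = 0 :=
  Iff.rfl

theorem single_mem_weightFiltration [AddGroup R] [DecidableEq ι] (a : ι) (r : R) :
    Pi.single a r ∈ weightFiltration w (w a) :=
  mem_weightFiltration.2 fun _ hb ↦ by rw [Pi.single_eq_of_ne (ne_of_apply_ne w hb.ne)]

theorem mem_weightFiltration_of_le [AddGroup R] (hw : ∀ a, i ≤ w a) (x : ι → R) :
    x ∈ weightFiltration w i :=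
  mem_weightFiltration.2 fun a ha ↦ absurd ha (hw a).not_gt

theorem eq_zero_of_mem_weightFiltration [AddGroup R] (hw : ∀ a, w a < i) {x : ι → R}
    (hx : x ∈ weightFiltration w i) : x = 0 :=
  funext fun a ↦ mem_weightFiltration.1 hx a (hw a)

theorem mul_eq_zero_of_mem_weightFiltration [Ring R] {x y : ι → R}
    (hx : x ∈ weightFiltration w i) (hy : y ∈ weightFiltration w j) (hab : w a + w b < i + j) :
    x a * y b = 0 := by
  obtain ha | hb : w a < i ∨ w b < j := by lia
  · rw [mem_weightFiltration.1 hx a ha, zero_mul]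
  · rw [mem_weightFiltration.1 hy b hb, mul_zero]

variable [Fintype ι]

theorem sum_curvature_single_eq_zero [Ring R] [DecidableEq ι] {β D : (ι → R) → (ι → R) → ι → R}
    (hβ : IsFilteredOp (weightFiltration w) β) (hD : IsFilteredOp (weightFiltration w) D)
    (hw : ∀ a, 1 ≤ w a) (x y : ι → R) :
    ∑ a, curvature β D (Pi.single a 1) x y a = 0 := by
  refine Finset.sum_eq_zero fun a _ ↦ ?_
  have hR : curvature β D (Pi.single a 1) x y ∈ weightFiltration w (w a + 1 + 1) :=
    hβ.curvature_mem hD (single_mem_weightFiltration a 1) (mem_weightFiltration_of_le hw x)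
      (mem_weightFiltration_of_le hw y)
  exact mem_weightFiltration.1 hR a (by lia)

namespace IsWeightHomogeneous

variable [CommRing R] {d : ℕ} {A : Matrix ι ι R}

theorem dotProduct_mulVec_eq_zero (hA : IsWeightHomogeneous w d A) {x y : ι → R}
    (hx : x ∈ weightFiltration w i) (hy : y ∈ weightFiltration w j) (hij : d < i + j) :
    x ⬝ᵥ A *ᵥ y = 0 := by
  simp only [dotProduct, mulVec, Finset.mul_sum]
  refine Finset.sum_eq_zero fun a _ ↦ Finset.sum_eq_zero fun b _ ↦ ?_
  by_cases hab : w a + w b = d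
  · rw [mul_left_comm, mul_eq_zero_of_mem_weightFiltration hx hy (hab ▸ hij), mul_zero]
  · rw [hA a b hab, zero_mul, mul_zero]

theorem vecMul_indicator (hA : IsWeightHomogeneous w d A) (x : ι → R) (i : ℕ) :
    {a | w a < i}.indicator x ᵥ* A = {b | d < i + w b}.indicator (x ᵥ* A) := by
  ext b
  simp only [vecMul, dotProduct, Set.indicator_apply, Set.mem_ofPred_eq]
  split_ifs with hb
  · refine Finset.sum_congr rfl fun a _ ↦ ?_
    by_cases hab : w a + w b = d
    · rw [if_pos (by lia)]
    · rw [hA a b hab, mul_zero, mul_zero]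
  · refine Finset.sum_eq_zero fun a _ ↦ ?_
    by_cases hab : w a + w b = d
    · rw [if_neg (by lia), zero_mul]
    · rw [hA a b hab, mul_zero]

-- If `x` is orthogonal to `F (d + 1 - i)`, then the part of `x` of weight less than `i` lies in
-- the left kernel of `A`.
theorem isSelfDualFiltration [DecidableEq ι] (hA : IsWeightHomogeneous w d A)
    (hdet : IsUnit A.det) :
    IsSelfDualFiltration (weightFiltration w) (fun x y : ι → R ↦ x ⬝ᵥ A *ᵥ y) (d + 1) := by
  refine fun i x ↦ ⟨fun hx j hij z hz ↦ hA.dotProduct_mulVec_eq_zero hx hz hij, fun hx ↦ ?_⟩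
  have hxA : ∀ b, d < i + w b → (x ᵥ* A) b = 0 := fun b hb ↦ by
    simpa only [dotProduct_mulVec, dotProduct_single_one] using
      hx (w b) hb _ (single_mem_weightFiltration b 1)
  have hker : {a | w a < i}.indicator x ᵥ* A = 0 ᵥ* A := by
    rw [hA.vecMul_indicator, zero_vecMul, Set.indicator_eq_zero']
    exact Set.disjoint_left.2 fun b hb hi ↦ hb (hxA b hi)
  have hzero : {a | w a < i}.indicator x = 0 :=
    vecMul_injective_of_isUnit ((isUnit_iff_isUnit_det A).2 hdet) hker
  exact mem_weightFiltration.2 fun a ha ↦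
    (Set.indicator_of_mem (s := {a | w a < i}) ha x).symm.trans (congrFun hzero a)

end IsWeightHomogeneous

end Weight

/-- The weights of the basis `(e₁, …, e₆)` of `T*𝔥₃`. -/
def weight : Fin 6 → ℕ := ![1, 1, 2, 3, 3, 2]

theorem isFilteredOp_bra : IsFilteredOp (weightFiltration weight) bra := by
  intro i j x y hx hy
  have hxy (a b : Fin 6) (hab : weight a + weight b < i + j) : x a * y b = 0 :=
    mul_eq_zero_of_mem_weightFiltration hx hy hab
  refine mem_weightFiltration.2 fun k hk ↦ ?_
  fin_cases k
  · rfl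
  · rfl
  · rfl
  · exact sub_eq_zero.2 ((hxy 1 2 hk).trans (hxy 2 1 hk).symm)
  · exact sub_eq_zero.2 ((hxy 2 0 hk).trans (hxy 0 2 hk).symm)
  · exact sub_eq_zero.2 ((hxy 0 1 hk).trans (hxy 1 0 hk).symm)

theorem isWeightHomogeneous_fromBlocks {M : Matrix (Fin 3) (Fin 3) ℝ} (ε₁ ε₂ : ℝ)
    (hrow : ∀ j, M 2 j = 0) (hcol : ∀ i, M i 2 = 0) :
    IsWeightHomogeneous weight 4 (Matrix.reindex finSumFinEquiv finSumFinEquiv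
      (Matrix.fromBlocks (ε₁ • E10) M Mᵀ (ε₂ • E10))) := by
  intro a b hab
  obtain ⟨a, rfl⟩ := (finSumFinEquiv (m := 3) (n := 3)).surjective a
  obtain ⟨b, rfl⟩ := (finSumFinEquiv (m := 3) (n := 3)).surjective b
  simp only [reindex_apply, submatrix_apply, Equiv.symm_apply_apply]
  rcases a with a | a <;> rcases b with b | b <;> fin_cases a <;> fin_cases b <;>
    first
    | exact absurd rfl hab
    | simp [E10, hrow, hcol]

theorem stmt_11_general (A : Matrix (Fin 6) (Fin 6) ℝ) (hA : IsWeightHomogeneous weight 4 A)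
    (hnd : IsUnit A.det) (D : (Fin 6 → ℝ) → (Fin 6 → ℝ) → (Fin 6 → ℝ))
    (hkoszul : IsLeviCivita bra (gm A) D) :
    (∀ x y z w, D x (curv D y z w) - curv D (D x y) z w - curv D y (D x z) w
        - curv D y z (D x w) = 0) ∧
    (∀ x y, ricci D x y = 0) := by
  have hD : IsFilteredOp (weightFiltration weight) D :=
    hkoszul.isFilteredOp isFilteredOp_bra (hA.isSelfDualFiltration hnd)
  have one_le_weight : ∀ a, 1 ≤ weight a := by decide
  have weight_lt_four : ∀ a, weight a < 4 := by decide
  have mem_one (x : Fin 6 → ℝ) : x ∈ weightFiltration weight 1 :=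
    mem_weightFiltration_of_le one_le_weight x
  refine ⟨fun x y z w ↦ ?_, sum_curvature_single_eq_zero isFilteredOp_bra hD one_le_weight⟩
  exact eq_zero_of_mem_weightFiltration weight_lt_four
    (isFilteredOp_bra.covDerivCurvature_mem hD (mem_one x) (mem_one y) (mem_one z) (mem_one w))

theorem last_row_col_eq_zero_of_canonical {M : Matrix (Fin 3) (Fin 3) ℝ}
    (hM : ∃ m11 m22 m12 : ℝ,
      M = Matrix.diagonal ![m11, m22, 0] ∨
      M = !![m11, m12, 0; -m12, m11, 0; 0, 0, 0] ∨
      M = !![m11, 0, 0; 1, m11, 0; 0, 0, 0]) :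
    (∀ j, M 2 j = 0) ∧ ∀ i, M i 2 = 0 := by
  obtain ⟨m11, m22, m12, rfl | rfl | rfl⟩ := hM <;>
    exact ⟨fun j ↦ by fin_cases j <;> simp, fun i ↦ by fin_cases i <;> simp⟩

/-- The metrics on `T*𝔥₃` with matrix `[[ε₁E₁₀, M],[Mᵀ, ε₂E₁₀]]`, `M` of one of the
three canonical forms of rank-1 center, are locally symmetric and Ricci-flat. -/
theorem stmt_11 (ε₁ ε₂ : ℝ) (h1 : ε₁ = 1 ∨ ε₁ = -1) (h2 : ε₂ = 1 ∨ ε₂ = -1)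
    (M : Matrix (Fin 3) (Fin 3) ℝ)
    (hM : ∃ m11 m22 m12 : ℝ,
      M = Matrix.diagonal ![m11, m22, 0] ∨
      M = !![m11, m12, 0; -m12, m11, 0; 0, 0, 0] ∨
      M = !![m11, 0, 0; 1, m11, 0; 0, 0, 0])
    (Smat : Matrix (Fin 6) (Fin 6) ℝ)
    (hSmat : Smat = Matrix.reindex finSumFinEquiv finSumFinEquiv
      (Matrix.fromBlocks (ε₁ • E10) M Mᵀ (ε₂ • E10)))
    (hnd : IsUnit Smat.det)
    (D : (Fin 6 → ℝ) → (Fin 6 → ℝ) → (Fin 6 → ℝ))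
    (hkoszul : ∀ x y z, 2 * gm Smat (D x y) z =
      gm Smat (bra x y) z - gm Smat (bra y z) x + gm Smat (bra z x) y) :
    (∀ x y z w, D x (curv D y z w) - curv D (D x y) z w - curv D y (D x z) w
        - curv D y z (D x w) = 0) ∧
    (∀ x y, ricci D x y = 0) := by
  obtain ⟨hrow, hcol⟩ := last_row_col_eq_zero_of_canonical hM
  exact stmt_11_general Smat (hSmat ▸ isWeightHomogeneous_fromBlocks ε₁ ε₂ hrow hcol) hnd D hkoszul
end
end
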